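/- Let α > -1/2 and let T_t(x,y) be the Bessel heat kernel on (0,∞): T_t(x,y) = c_α t^{-1} exp(-(x²+y²)/(4t)) (xy)^{-(α-1)/2} I_{(α-1)/2}(xy/(2t)), where I_μ is the modified Bessel function. Then there exist constants c, C > 0 such that C^{-1} ≤ T_t(x,y) / m_t(x,y) ≤ C for all x, y, t > 0, where m_t(x,y) = t^{-(α+1)/2} exp(-(x²+y²)/(4t)) if xy < t, and m_t(x,y) = t^{-1/2}(xy)^{-α/2} exp(-|x-y|²/(4t)) if xy ≥ t. -/

import Mathlib

open MeasureTheory Set Real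

/-- The modified Bessel function of the first kind `I_μ`, via its power series. -/
noncomputable def besselI (μ r : ℝ) : ℝ :=
  ∑' n : ℕ, (r / 2) ^ (2 * (n : ℝ) + μ) / ((n.factorial : ℝ) * Real.Gamma ((n : ℝ) + μ + 1))

/-- The Bessel heat kernel on `(0,∞)` with parameter `α` and normalizing constant `cα`. -/
noncomputable def besselHeatKernel (α cα t x y : ℝ) : ℝ :=
  cα * t⁻¹ * Real.exp (-(x ^ 2 + y ^ 2) / (4 * t)) * (x * y) ^ (-(α - 1) / 2) *
    besselI ((α - 1) / 2) (x * y / (2 * t))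

/-- The comparison function `m_t(x,y)` in the two-sided heat kernel estimate. -/
noncomputable def heatComparison (α t x y : ℝ) : ℝ :=
  if x * y < t then t ^ (-(α + 1) / 2) * Real.exp (-(x ^ 2 + y ^ 2) / (4 * t))
  else t ^ (-(1 : ℝ) / 2) * (x * y) ^ (-α / 2) * Real.exp (-|x - y| ^ 2 / (4 * t))

open Asymptotics Filter
open scoped Nat

/-! Euler's limit formula and the duplication formula show that the coefficients
`1 / (4 ^ n * n! * Γ(n + μ + 1))` of `(r / 2) ^ (-μ) * I_μ(r)` are comparable to
`1 / ((2 * n)! * (n + 1) ^ (μ + 1 / 2))`. Hence `I_μ(r)` is comparable to `r ^ (-1 / 2)` times the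
moment of order `-(μ + 1 / 2)` of `(n + 1) / r` under the weights `r ^ (2 * n) / (2 * n)!`. As these
weights concentrate near `2 * n ≈ r`, for `r` bounded away from `0` every such moment is comparable
to the total mass `cosh r`, hence to `exp r`: exponential moments and index shifts bound positive
and negative moments from above, and the AM-GM inequality between the moments of orders `b` and `-b`
turns these upper bounds into lower ones. For bounded `r` the series is comparable to its constant
term, so `I_μ(r)` is comparable to `r ^ μ`. With `r = x * y / (2 * t)` the two regimes of `I_μ` are
those of the heat kernel. -/

section GammaGrowth

lemma prod_range_add_mul_Gamma {s : ℝ} (hs : ∀ m : ℕ, s ≠ -m) (n : ℕ) :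
    (∏ j ∈ Finset.range n, (s + j)) * Gamma s = Gamma (s + n) := by
  induction n with
  | zero => simp
  | succ n ih =>
    have hsn : s + n ≠ 0 := fun h ↦ hs n (eq_neg_of_add_eq_zero_left h)
    rw [Finset.prod_range_succ, mul_right_comm, ih, Nat.cast_succ, ← add_assoc,
      Gamma_add_one hsn, mul_comm]

lemma isTheta_natCast_add_const (s : ℝ) :
    (fun n : ℕ ↦ (n : ℝ) + s) =Θ[atTop] fun n : ℕ ↦ (n : ℝ) :=
  (isTheta_refl _ _).add_isLittleO
    (isLittleO_const_left.2 (.inr (tendsto_norm_atTop_atTop.comp tendsto_natCast_atTop_atTop)))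

lemma isTheta_GammaSeq_one {s : ℝ} (hs : ∀ m : ℕ, s ≠ -m) :
    GammaSeq s =Θ[atTop] fun _ ↦ (1 : ℝ) :=
  ((isEquivalent_const_iff_tendsto (Gamma_ne_zero hs)).2
    (GammaSeq_tendsto_Gamma s)).isTheta.trans
    (isTheta_const_const (Gamma_ne_zero hs) one_ne_zero)

lemma isTheta_Gamma_natCast_add {s : ℝ} (hs : ∀ m : ℕ, s ≠ -m) :
    (fun n : ℕ ↦ Gamma (n + s)) =Θ[⊤] fun n ↦ ((n : ℝ) + 1) ^ (s - 1) * n ! := by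
  have hΓ : ∀ n : ℕ, Gamma (n + s) ≠ 0 := fun n ↦ Gamma_ne_zero fun m h ↦ hs (m + n) <| by
    push_cast; linarith
  have euler : (fun n : ℕ ↦ Gamma s * ((n : ℝ) ^ s * n !) / (GammaSeq s n * (n + s)))
      =ᶠ[atTop] fun n : ℕ ↦ Gamma (n + s) := by
    filter_upwards [eventually_gt_atTop 0] with n hn
    have hprod : (∏ j ∈ Finset.range n, (s + j)) = Gamma (n + s) / Gamma s := by
      rw [eq_div_iff (Gamma_ne_zero hs), prod_range_add_mul_Gamma hs, add_comm]
    have hsn : (n : ℝ) + s ≠ 0 := fun h ↦ hs n (eq_neg_of_add_eq_zero_right h)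
    have := hΓ n
    have := Gamma_ne_zero hs
    rw [GammaSeq, Finset.prod_range_succ, hprod, add_comm s]
    field_simp
  have atTop_bound : (fun n : ℕ ↦ Gamma (n + s)) =Θ[atTop]
      fun n ↦ ((n : ℝ) + 1) ^ (s - 1) * n ! := by
    have hpow : ∀ p : ℝ, (fun n : ℕ ↦ (n : ℝ) ^ p) =Θ[atTop] fun n : ℕ ↦ ((n : ℝ) + 1) ^ p :=
      fun p ↦ (isTheta_natCast_add_const 1).symm.rpow
        (.of_forall fun n ↦ n.cast_nonneg) (.of_forall fun n ↦ by positivity)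
    refine euler.symm.trans_isTheta ?_
    refine (((((hpow s).mul (isTheta_refl (fun n : ℕ ↦ (n ! : ℝ)) _)).const_mul_left
      (Gamma_ne_zero hs)).div ((isTheta_GammaSeq_one hs).mul ((isTheta_natCast_add_const s).trans
      (isTheta_natCast_add_const 1).symm)))).trans_eventuallyEq (.of_forall fun n ↦ ?_)
    simp only [one_mul]
    rw [rpow_sub_one (by positivity)]
    ring
  exact ⟨atTop_bound.1.nat_of_atTop (.of_forall fun n h ↦ absurd h (by positivity)),
    atTop_bound.2.nat_of_atTop (.of_forall fun n h ↦ absurd h (hΓ n))⟩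

lemma factorial_mul_Gamma_natCast_add_half (n : ℕ) :
    n ! * Gamma (n + 1 / 2) = √π * ((2 * n)! / 4 ^ n) := by
  have duplication := Gamma_mul_Gamma_add_half ((n : ℝ) + 1 / 2)
  have hpow : (2 : ℝ) ^ (1 - ((2 * n : ℕ) + 1 : ℝ)) = (4 ^ n)⁻¹ := by
    rw [sub_add_cancel_right, rpow_neg two_pos.le, rpow_natCast, pow_mul]
    norm_num
  rw [show (n : ℝ) + 1 / 2 + 1 / 2 = n + 1 by ring,
    show 2 * ((n : ℝ) + 1 / 2) = (2 * n : ℕ) + 1 by push_cast; ring,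
    Gamma_nat_eq_factorial, Gamma_nat_eq_factorial, hpow] at duplication
  linear_combination duplication

lemma isTheta_factorial_mul_Gamma_natCast_add {s : ℝ} (hs : ∀ m : ℕ, s ≠ -m) :
    (fun n : ℕ ↦ n ! * Gamma (n + s)) =Θ[⊤]
      fun n ↦ (2 * n)! / 4 ^ n * ((n : ℝ) + 1) ^ (s - 1 / 2) := by
  have half : (fun n : ℕ ↦ ((n : ℝ) + 1) ^ (1 / 2 - 1 : ℝ) * n !) =Θ[⊤]
      fun n : ℕ ↦ Gamma (n + 1 / 2) :=
    (isTheta_Gamma_natCast_add fun m h ↦ by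
      have : (0 : ℝ) ≤ m := m.cast_nonneg
      linarith).symm
  calc (fun n : ℕ ↦ n ! * Gamma (n + s))
      =Θ[⊤] fun n ↦ n ! * (((n : ℝ) + 1) ^ (s - 1) * n !) :=
        (isTheta_refl _ _).mul (isTheta_Gamma_natCast_add hs)
    _ = fun n : ℕ ↦
          n ! * ((n : ℝ) + 1) ^ (s - 1 / 2) * (((n : ℝ) + 1) ^ (1 / 2 - 1 : ℝ) * n !) := by
        ext n
        rw [show s - 1 = (s - 1 / 2) + (1 / 2 - 1) by ring, rpow_add (by positivity)]
        ring
    _ =Θ[⊤] fun n : ℕ ↦ n ! * ((n : ℝ) + 1) ^ (s - 1 / 2) * Gamma (n + 1 / 2) :=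
        (isTheta_refl _ _).mul half
    _ = fun n : ℕ ↦ √π * ((2 * n)! / 4 ^ n * ((n : ℝ) + 1) ^ (s - 1 / 2)) := by
        ext n
        linear_combination ((n : ℝ) + 1) ^ (s - 1 / 2) * factorial_mul_Gamma_natCast_add_half n
    _ =Θ[⊤] fun n ↦ (2 * n)! / 4 ^ n * ((n : ℝ) + 1) ^ (s - 1 / 2) :=
        (isTheta_refl _ _).const_mul_left (by positivity)

end GammaGrowth

section Series

variable {ι α : Type*}

lemma isBigO_tsum_mul {a b : ι → ℝ} {u : ι → α → ℝ} {l : Filter α} (hab : a =O[⊤] b)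
    (hb : ∀ i, 0 ≤ b i) (hu : ∀ᶠ x in l, ∀ i, 0 ≤ u i x)
    (hsum : ∀ᶠ x in l, Summable fun i ↦ b i * u i x) :
    (fun x ↦ ∑' i, a i * u i x) =O[l] fun x ↦ ∑' i, b i * u i x := by
  obtain ⟨C, hC⟩ := isBigO_top.1 hab
  refine IsBigO.of_bound C ?_
  filter_upwards [hu, hsum] with x hux hsumx
  rw [norm_of_nonneg (tsum_nonneg fun i ↦ mul_nonneg (hb i) (hux i))]
  refine tsum_of_norm_bounded (hsumx.hasSum.mul_left C) fun i ↦ ?_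
  rw [norm_mul, norm_of_nonneg (hux i), ← mul_assoc]
  gcongr
  · exact hux i
  · simpa only [norm_of_nonneg (hb i)] using hC i

lemma isTheta_tsum_mul {a b : ι → ℝ} {u : ι → α → ℝ} {l : Filter α} (hab : a =Θ[⊤] b)
    (ha : ∀ i, 0 ≤ a i) (hb : ∀ i, 0 ≤ b i) (hu : ∀ᶠ x in l, ∀ i, 0 ≤ u i x)
    (hsum : ∀ᶠ x in l, Summable fun i ↦ b i * u i x) :
    (fun x ↦ ∑' i, a i * u i x) =Θ[l] fun x ↦ ∑' i, b i * u i x :=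
  ⟨isBigO_tsum_mul hab.1 hb hu hsum, isBigO_tsum_mul hab.2 ha hu <| hsum.mono fun _ hx ↦
    summable_of_isBigO hx ((hab.1.mono le_top).mul (isBigO_refl _ _))⟩

lemma isTheta_tsum_mul_pow_one {a : ℕ → ℝ} {R : ℝ} (ha : ∀ n, 0 ≤ a n) (ha₀ : 0 < a 0)
    (hsum : Summable fun n ↦ a n * R ^ n) :
    (fun x ↦ ∑' n, a n * x ^ n) =Θ[𝓟 (Icc 0 R)] fun _ ↦ (1 : ℝ) := by
  have hterm {x : ℝ} (hx : x ∈ Icc 0 R) (n : ℕ) : 0 ≤ a n * x ^ n :=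
    mul_nonneg (ha n) (pow_nonneg hx.1 n)
  have hmono {x : ℝ} (hx : x ∈ Icc 0 R) (n : ℕ) : a n * x ^ n ≤ a n * R ^ n :=
    mul_le_mul_of_nonneg_left (pow_le_pow_left₀ hx.1 hx.2 n) (ha n)
  have hsummable {x : ℝ} (hx : x ∈ Icc 0 R) : Summable fun n ↦ a n * x ^ n :=
    .of_nonneg_of_le (hterm hx) (hmono hx) hsum
  constructor
  · refine isBigO_principal.2 ⟨∑' n, a n * R ^ n, fun x hx ↦ ?_⟩
    rw [norm_of_nonneg (tsum_nonneg (hterm hx)), norm_one, mul_one]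
    exact (hsummable hx).tsum_le_tsum (hmono hx) hsum
  · refine isBigO_principal.2 ⟨(a 0)⁻¹, fun x hx ↦ ?_⟩
    rw [norm_of_nonneg (tsum_nonneg (hterm hx)), norm_one, ← div_eq_inv_mul, one_le_div ha₀]
    simpa only [pow_zero, mul_one] using (hsummable hx).le_tsum 0 fun n _ ↦ hterm hx n

end Series

lemma exists_inv_le_div_le_of_isTheta {α : Type*} {f g : α → ℝ} {s : Set α}
    (h : f =Θ[𝓟 s] g) (hf : ∀ x ∈ s, 0 ≤ f x) (hg : ∀ x ∈ s, 0 < g x) :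
    ∃ C > 0, ∀ x ∈ s, C⁻¹ ≤ f x / g x ∧ f x / g x ≤ C := by
  obtain ⟨A, hA⟩ := isBigO_principal.1 h.1
  obtain ⟨B, hB⟩ := isBigO_principal.1 h.2
  have hC : 0 < max 1 (max A B) := one_pos.trans_le (le_max_left _ _)
  refine ⟨max 1 (max A B), hC, fun x hx ↦ ?_⟩
  have hAx := hA x hx
  have hBx := hB x hx
  rw [norm_of_nonneg (hf x hx), norm_of_nonneg (hg x hx).le] at hAx hBx
  constructor
  · rw [le_div_iff₀ (hg x hx), inv_mul_le_iff₀ hC]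
    exact hBx.trans (mul_le_mul_of_nonneg_right (by simp) (hf x hx))
  · rw [div_le_iff₀ (hg x hx)]
    exact hAx.trans (mul_le_mul_of_nonneg_right (by simp) (hg x hx).le)

/-- The term of index `n` of `coshMoment b r`. -/
noncomputable def coshMomentTerm (b r : ℝ) (n : ℕ) : ℝ :=
  r ^ (2 * n) / (2 * n)! * (((n : ℝ) + 1) / r) ^ b

/-- The `b`-th moment of `(n + 1) / r` for the weights `r ^ (2 * n) / (2 * n)!`, whose total mass is
`cosh r`. The shift `n + 1` keeps negative moments finite. -/
noncomputable def coshMoment (b r : ℝ) : ℝ := ∑' n, coshMomentTerm b r n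

lemma coshMomentTerm_pos (b : ℝ) {r : ℝ} (hr : 0 < r) (n : ℕ) : 0 < coshMomentTerm b r n := by
  unfold coshMomentTerm
  positivity

lemma rpow_le_pow_add_inv_pow {x b : ℝ} {k : ℕ} (hx : 0 < x) (hb : |b| ≤ k) :
    x ^ b ≤ x ^ k + (x ^ k)⁻¹ := by
  obtain ⟨hb₁, hb₂⟩ := abs_le.1 hb
  rw [← rpow_natCast, ← rpow_neg hx.le]
  rcases le_total 1 x with h | h
  · linarith [rpow_le_rpow_of_exponent_le h hb₂, rpow_pos_of_pos hx (-k : ℝ)]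
  · linarith [rpow_le_rpow_of_exponent_ge hx h hb₁, rpow_pos_of_pos hx (k : ℝ)]

lemma factorial_two_mul_add_le (n k : ℕ) : (2 * n + k)! ≤ (2 * n)! * ((k + 2) * (n + 1)) ^ k := by
  rw [← Nat.factorial_mul_ascFactorial]
  gcongr
  refine (Nat.ascFactorial_le_pow_add (2 * n) k).trans (Nat.pow_le_pow_left ?_ k)
  nlinarith [Nat.zero_le (k * n)]

lemma cosh_weight_mul_pow_le {r : ℝ} (hr : 0 < r) (k n : ℕ) :
    r ^ (2 * n) / (2 * n)! * (((n : ℝ) + 1) / r) ^ k ≤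
      k ! * exp (1 / r) * ((r * exp (1 / (2 * r))) ^ (2 * n) / (2 * n)!) := by
  have hpow : (((n : ℝ) + 1) / r) ^ k ≤ k ! * exp (((n : ℝ) + 1) / r) :=
    (div_le_iff₀' (by positivity)).1 (pow_div_factorial_le_exp _ (by positivity) k)
  have hexp : exp (((n : ℝ) + 1) / r) = exp (1 / r) * exp (1 / (2 * r)) ^ (2 * n) := by
    rw [← exp_nat_mul, ← exp_add]
    congr 1
    push_cast
    field_simp
    ring
  calc r ^ (2 * n) / (2 * n)! * (((n : ℝ) + 1) / r) ^ k
      ≤ r ^ (2 * n) / (2 * n)! * (k ! * exp (((n : ℝ) + 1) / r)) := by gcongr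
    _ = k ! * exp (1 / r) * ((r * exp (1 / (2 * r))) ^ (2 * n) / (2 * n)!) := by
      rw [hexp, mul_pow]
      ring

lemma cosh_weight_mul_inv_pow_le {r : ℝ} (hr : 0 < r) (k n : ℕ) :
    r ^ (2 * n) / (2 * n)! * ((((n : ℝ) + 1) / r) ^ k)⁻¹ ≤
      ((k : ℝ) + 2) ^ k * (r ^ (2 * n + k) / (2 * n + k)!) := by
  have hfact : ((2 * n + k)! : ℝ) ≤ (2 * n)! * (((k : ℝ) + 2) * (n + 1)) ^ k := by
    exact_mod_cast factorial_two_mul_add_le n k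
  rw [← inv_pow, inv_div, div_pow, div_mul_div_comm, ← pow_add, ← mul_div_assoc,
    div_le_div_iff₀ (by positivity) (by positivity)]
  calc r ^ (2 * n + k) * ((2 * n + k)! : ℝ)
      ≤ r ^ (2 * n + k) * ((2 * n)! * (((k : ℝ) + 2) * (n + 1)) ^ k) := by gcongr
    _ = ((k : ℝ) + 2) ^ k * r ^ (2 * n + k) * ((2 * n)! * ((n : ℝ) + 1) ^ k) := by
      rw [mul_pow]
      ring

lemma summable_and_tsum_pow_add_div_factorial_le {r : ℝ} (hr : 0 ≤ r) (k : ℕ) :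
    Summable (fun n : ℕ ↦ r ^ (2 * n + k) / (2 * n + k)!) ∧
      ∑' n : ℕ, r ^ (2 * n + k) / (2 * n + k)! ≤ exp r := by
  have hinj : Function.Injective fun n : ℕ ↦ 2 * n + k := fun m n h ↦ by
    simp only at h
    lia
  refine ⟨(summable_pow_div_factorial r).comp_injective hinj, ?_⟩
  rw [exp_eq_exp_ℝ, NormedSpace.exp_eq_tsum_div]
  exact tsum_comp_le_tsum_of_inj (summable_pow_div_factorial r) (fun n ↦ by positivity) hinj

lemma summable_coshMomentTerm_and_coshMoment_le {b r : ℝ} {k : ℕ} (hb : |b| ≤ k) (hr : 0 < r) :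
    Summable (coshMomentTerm b r) ∧
      coshMoment b r ≤ k ! * exp (1 / r) * cosh (r * exp (1 / (2 * r))) +
        ((k : ℝ) + 2) ^ k * exp r := by
  obtain ⟨hsum, hle⟩ := summable_and_tsum_pow_add_div_factorial_le hr.le k
  have hdom := ((hasSum_cosh (r * exp (1 / (2 * r)))).mul_left (k ! * exp (1 / r))).add
    (hsum.hasSum.mul_left (((k : ℝ) + 2) ^ k))
  have hterm (n : ℕ) : coshMomentTerm b r n ≤
      k ! * exp (1 / r) * ((r * exp (1 / (2 * r))) ^ (2 * n) / (2 * n)!) +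
        ((k : ℝ) + 2) ^ k * (r ^ (2 * n + k) / (2 * n + k)!) := by
    calc coshMomentTerm b r n
        ≤ r ^ (2 * n) / (2 * n)! * ((((n : ℝ) + 1) / r) ^ k + ((((n : ℝ) + 1) / r) ^ k)⁻¹) := by
          unfold coshMomentTerm
          gcongr
          exact rpow_le_pow_add_inv_pow (by positivity) hb
      _ ≤ _ := by
          rw [mul_add]
          exact add_le_add (cosh_weight_mul_pow_le hr k n) (cosh_weight_mul_inv_pow_le hr k n)
  have hsummable := Summable.of_nonneg_of_le (fun n ↦ (coshMomentTerm_pos b hr n).le) hterm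
    hdom.summable
  refine ⟨hsummable, (hasSum_le hterm hsummable.hasSum hdom).trans ?_⟩
  gcongr

lemma summable_coshMomentTerm (b : ℝ) {r : ℝ} (hr : 0 < r) : Summable (coshMomentTerm b r) :=
  (summable_coshMomentTerm_and_coshMoment_le (Nat.le_ceil |b|) hr).1

lemma cosh_le_exp {r : ℝ} (hr : 0 ≤ r) : cosh r ≤ exp r := by
  linarith [cosh_add_sinh r, sinh_nonneg_iff.2 hr]

lemma mul_exp_one_div_two_mul_le {R r : ℝ} (hR : 0 < R) (hr : R ≤ r) :
    r * exp (1 / (2 * r)) ≤ r + exp (1 / (2 * R)) / 2 := by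
  have hr₀ : 0 < r := hR.trans_le hr
  have htangent : exp (1 / (2 * r)) ≤ 1 + 1 / (2 * r) * exp (1 / (2 * r)) := by
    have := mul_le_mul_of_nonneg_right (one_sub_le_exp_neg (1 / (2 * r))) (exp_pos (1 / (2 * r))).le
    rw [← exp_add, neg_add_cancel, exp_zero] at this
    linarith
  calc r * exp (1 / (2 * r)) ≤ r * (1 + 1 / (2 * r) * exp (1 / (2 * r))) := by gcongr
    _ = r + exp (1 / (2 * r)) / 2 := by field_simp
    _ ≤ r + exp (1 / (2 * R)) / 2 := by gcongr

lemma exists_coshMoment_le_mul_exp (b : ℝ) {R : ℝ} (hR : 0 < R) :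
    ∃ C > 0, ∀ r ≥ R, coshMoment b r ≤ C * exp r := by
  set k := ⌈|b|⌉₊
  refine ⟨k ! * exp (1 / R) * exp (exp (1 / (2 * R)) / 2) + ((k : ℝ) + 2) ^ k, by positivity,
    fun r hr ↦ ?_⟩
  have hr₀ : 0 < r := hR.trans_le hr
  have hcosh : cosh (r * exp (1 / (2 * r))) ≤ exp (exp (1 / (2 * R)) / 2) * exp r := by
    rw [← exp_add, add_comm]
    exact (cosh_le_exp (by positivity)).trans (exp_le_exp.2 (mul_exp_one_div_two_mul_le hR hr))
  calc coshMoment b r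
      ≤ k ! * exp (1 / r) * cosh (r * exp (1 / (2 * r))) + ((k : ℝ) + 2) ^ k * exp r :=
        (summable_coshMomentTerm_and_coshMoment_le (Nat.le_ceil |b|) hr₀).2
    _ ≤ k ! * exp (1 / R) * (exp (exp (1 / (2 * R)) / 2) * exp r) +
          ((k : ℝ) + 2) ^ k * exp r := by gcongr
    _ = _ := by ring

lemma two_mul_cosh_le_coshMoment_add (b : ℝ) {r c : ℝ} (hr : 0 < r) (hc : 0 < c) :
    2 * cosh r ≤ c * coshMoment b r + c⁻¹ * coshMoment (-b) r := by
  refine hasSum_le (fun n ↦ ?_) ((hasSum_cosh r).mul_left 2)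
    (((summable_coshMomentTerm b hr).hasSum.mul_left c).add
      ((summable_coshMomentTerm (-b) hr).hasSum.mul_left c⁻¹))
  unfold coshMomentTerm
  rw [rpow_neg (by positivity)]
  set y := (((n : ℝ) + 1) / r) ^ b
  have hy₀ : 0 < y := by positivity
  have amgm : 2 ≤ c * y + (c * y)⁻¹ := by
    have := sq_nonneg (c * y - 1)
    field_simp
    linarith
  calc 2 * (r ^ (2 * n) / (2 * n)!) ≤ (c * y + (c * y)⁻¹) * (r ^ (2 * n) / (2 * n)!) := by gcongr
    _ = _ := by
      rw [mul_inv]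
      ring

lemma exists_exp_le_mul_coshMoment (b : ℝ) {R : ℝ} (hR : 0 < R) :
    ∃ C, ∀ r ≥ R, exp r ≤ C * coshMoment b r := by
  obtain ⟨C, hC, hle⟩ := exists_coshMoment_le_mul_exp (-b) hR
  refine ⟨4 * C, fun r hr ↦ ?_⟩
  have hle' : (2 * C)⁻¹ * coshMoment (-b) r ≤ exp r / 2 := by
    calc (2 * C)⁻¹ * coshMoment (-b) r ≤ (2 * C)⁻¹ * (C * exp r) := by
          gcongr
          exact hle r hr
      _ = exp r / 2 := by field_simp
  have hcosh : exp r ≤ 2 * cosh r := by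
    rw [cosh_eq]
    linarith [exp_pos (-r)]
  linarith [two_mul_cosh_le_coshMoment_add b (hR.trans_le hr) (by positivity : 0 < 2 * C)]

lemma isTheta_coshMoment_exp (b : ℝ) {R : ℝ} (hR : 0 < R) :
    coshMoment b =Θ[𝓟 (Ici R)] exp := by
  obtain ⟨C, -, hC⟩ := exists_coshMoment_le_mul_exp b hR
  obtain ⟨D, hD⟩ := exists_exp_le_mul_coshMoment b hR
  have hpos (r : ℝ) (hr : R ≤ r) : 0 ≤ coshMoment b r :=
    tsum_nonneg fun n ↦ (coshMomentTerm_pos b (hR.trans_le hr) n).le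
  constructor
  · refine isBigO_principal.2 ⟨C, fun r hr ↦ ?_⟩
    simpa only [norm_of_nonneg (hpos r hr), norm_of_nonneg (exp_pos r).le] using hC r hr
  · refine isBigO_principal.2 ⟨D, fun r hr ↦ ?_⟩
    simpa only [norm_of_nonneg (hpos r hr), norm_of_nonneg (exp_pos r).le] using hD r hr

/-- The coefficient of `r ^ (2 * n)` in the entire function `(r / 2) ^ (-μ) * I_μ(r)`. -/
noncomputable def besselCoeff (μ : ℝ) (n : ℕ) : ℝ :=
  (4 ^ n * (n ! * Gamma (n + (μ + 1))))⁻¹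

lemma besselCoeff_pos {μ : ℝ} (hμ : -1 < μ) (n : ℕ) : 0 < besselCoeff μ n := by
  have : 0 < (n : ℝ) + (μ + 1) := add_pos_of_nonneg_of_pos n.cast_nonneg (by linarith)
  have := Gamma_pos_of_pos this
  unfold besselCoeff
  positivity

lemma besselI_eq_rpow_mul_tsum (μ : ℝ) {r : ℝ} (hr : 0 < r) :
    besselI μ r = (r / 2) ^ μ * ∑' n, besselCoeff μ n * (r ^ 2) ^ n := by
  rw [besselI, ← tsum_mul_left]
  congr 1 with n
  have hpow : (r / 2) ^ (2 * (n : ℝ)) = (r ^ 2) ^ n / 4 ^ n := by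
    rw [rpow_mul (by positivity), rpow_natCast, rpow_two, div_pow, div_pow]
    norm_num
  rw [rpow_add (by positivity), hpow, besselCoeff, add_assoc, mul_inv]
  ring

lemma besselI_nonneg {μ r : ℝ} (hμ : -1 < μ) (hr : 0 < r) : 0 ≤ besselI μ r := by
  rw [besselI_eq_rpow_mul_tsum μ hr]
  exact mul_nonneg (by positivity) <|
    tsum_nonneg fun n ↦ mul_nonneg (besselCoeff_pos hμ n).le (by positivity)

lemma isTheta_besselCoeff {μ : ℝ} (hμ : ∀ m : ℕ, μ + 1 ≠ -m) :
    besselCoeff μ =Θ[⊤] fun n : ℕ ↦ ((2 * n)! * ((n : ℝ) + 1) ^ (μ + 1 / 2))⁻¹ := by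
  refine ((isTheta_refl (fun n : ℕ ↦ (4 : ℝ) ^ n) ⊤).mul
    (isTheta_factorial_mul_Gamma_natCast_add hμ)).inv.trans_eventuallyEq (.of_forall fun n ↦ ?_)
  simp only
  rw [show μ + 1 - 1 / 2 = μ + 1 / 2 by ring]
  field_simp

lemma inv_factorial_mul_rpow_mul_sq_pow (b : ℝ) {r : ℝ} (hr : 0 < r) (n : ℕ) :
    ((2 * n)! * ((n : ℝ) + 1) ^ b)⁻¹ * (r ^ 2) ^ n = r ^ (-b) * coshMomentTerm (-b) r n := by
  rw [coshMomentTerm, div_rpow (by positivity) hr.le, rpow_neg hr.le,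
    rpow_neg (by positivity : 0 ≤ (n : ℝ) + 1), pow_mul]
  field_simp

lemma summable_inv_factorial_mul_rpow_mul_sq_pow (b : ℝ) {r : ℝ} (hr : 0 < r) :
    Summable fun n : ℕ ↦ ((2 * n)! * ((n : ℝ) + 1) ^ b)⁻¹ * (r ^ 2) ^ n := by
  simp only [inv_factorial_mul_rpow_mul_sq_pow b hr]
  exact (summable_coshMomentTerm (-b) hr).mul_left _

lemma summable_besselCoeff_mul_sq_pow {μ r : ℝ} (hμ : ∀ m : ℕ, μ + 1 ≠ -m) (hr : 0 < r) :
    Summable fun n ↦ besselCoeff μ n * (r ^ 2) ^ n :=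
  summable_of_isBigO (summable_inv_factorial_mul_rpow_mul_sq_pow (μ + 1 / 2) hr)
    (((isTheta_besselCoeff hμ).1.mono le_top).mul (isBigO_refl _ _))

lemma add_one_ne_neg_natCast {μ : ℝ} (hμ : -1 < μ) (m : ℕ) : μ + 1 ≠ -m := by
  have : (0 : ℝ) ≤ m := m.cast_nonneg
  linarith

lemma isTheta_besselI_rpow {μ R : ℝ} (hμ : -1 < μ) (hR : 0 < R) :
    besselI μ =Θ[𝓟 (Ioc 0 R)] fun r ↦ r ^ μ := by
  have hseries : (fun r ↦ ∑' n, besselCoeff μ n * (r ^ 2) ^ n) =Θ[𝓟 (Ioc 0 R)]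
      fun _ ↦ (1 : ℝ) := by
    have hmaps : Tendsto (fun r : ℝ ↦ r ^ 2) (𝓟 (Ioc 0 R)) (𝓟 (Icc 0 (R ^ 2))) :=
      tendsto_principal_principal.2 fun r hr ↦ ⟨by positivity, pow_le_pow_left₀ hr.1.le hr.2 2⟩
    have h := isTheta_tsum_mul_pow_one (fun n ↦ (besselCoeff_pos hμ n).le) (besselCoeff_pos hμ 0)
      (summable_besselCoeff_mul_sq_pow (add_one_ne_neg_natCast hμ) hR)
    exact ⟨h.1.comp_tendsto hmaps, h.2.comp_tendsto hmaps⟩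
  have heq : besselI μ =ᶠ[𝓟 (Ioc 0 R)]
      fun r ↦ (2 ^ μ)⁻¹ * (r ^ μ * ∑' n, besselCoeff μ n * (r ^ 2) ^ n) :=
    eventually_principal.2 fun r hr ↦ by
      rw [besselI_eq_rpow_mul_tsum μ hr.1, div_rpow hr.1.le two_pos.le]
      ring
  refine heq.trans_isTheta (IsTheta.const_mul_left (by positivity) ?_)
  simpa only [mul_one] using (isTheta_refl _ _).mul hseries

lemma isTheta_besselI_rpow_mul_exp {μ R : ℝ} (hμ : -1 < μ) (hR : 0 < R) :
    besselI μ =Θ[𝓟 (Ici R)] fun r ↦ r ^ (-1 / 2 : ℝ) * exp r := by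
  have hpos : ∀ᶠ r in 𝓟 (Ici R), 0 < r := eventually_principal.2 fun r hr ↦ hR.trans_le hr
  have hseries : (fun r ↦ ∑' n, besselCoeff μ n * (r ^ 2) ^ n) =Θ[𝓟 (Ici R)]
      fun r ↦ ∑' n : ℕ, ((2 * n)! * ((n : ℝ) + 1) ^ (μ + 1 / 2))⁻¹ * (r ^ 2) ^ n :=
    isTheta_tsum_mul (isTheta_besselCoeff (add_one_ne_neg_natCast hμ))
      (fun n ↦ (besselCoeff_pos hμ n).le) (fun n ↦ by positivity)
      (.of_forall fun r n ↦ by positivity)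
      (hpos.mono fun r hr ↦ summable_inv_factorial_mul_rpow_mul_sq_pow _ hr)
  have hmoment : (fun r ↦ (r / 2) ^ μ *
        ∑' n : ℕ, ((2 * n)! * ((n : ℝ) + 1) ^ (μ + 1 / 2))⁻¹ * (r ^ 2) ^ n) =ᶠ[𝓟 (Ici R)]
      fun r ↦ (2 ^ μ)⁻¹ * (r ^ (-1 / 2 : ℝ) * coshMoment (-(μ + 1 / 2)) r) := by
    filter_upwards [hpos] with r hr
    simp only [inv_factorial_mul_rpow_mul_sq_pow _ hr]
    rw [tsum_mul_left, ← coshMoment, div_rpow hr.le two_pos.le,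
      show (-1 / 2 : ℝ) = μ + -(μ + 1 / 2) by ring, rpow_add hr]
    ring
  calc besselI μ
      =ᶠ[𝓟 (Ici R)] fun r ↦ (r / 2) ^ μ * ∑' n, besselCoeff μ n * (r ^ 2) ^ n :=
        hpos.mono fun r hr ↦ besselI_eq_rpow_mul_tsum μ hr
    _ =Θ[𝓟 (Ici R)] _ := (isTheta_refl _ _).mul hseries
    _ =ᶠ[𝓟 (Ici R)] _ := hmoment
    _ =Θ[𝓟 (Ici R)] fun r ↦ r ^ (-1 / 2 : ℝ) * exp r :=
        ((isTheta_refl _ _).mul (isTheta_coshMoment_exp _ hR)).const_mul_left (by positivity)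

/-- The two-regime model of `I_μ` on `(0, ∞)`. With `2 * r` in place of `r` in the powers, the
factors that `r = x * y / (2 * t)` produces in the heat kernel are the same in both regimes. -/
noncomputable def besselComparison (μ r : ℝ) : ℝ :=
  if r < 1 / 2 then (2 * r) ^ μ else (2 * r) ^ (-1 / 2 : ℝ) * exp r

lemma besselComparison_pos (μ : ℝ) {r : ℝ} (hr : 0 < r) : 0 < besselComparison μ r := by
  unfold besselComparison
  split_ifs <;> positivity

lemma isTheta_besselI_besselComparison {μ : ℝ} (hμ : -1 < μ) :
    besselI μ =Θ[𝓟 (Ioi 0)] besselComparison μ := by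
  have small : besselI μ =Θ[𝓟 (Ioo 0 (1 / 2))] besselComparison μ := by
    have heq : besselComparison μ =ᶠ[𝓟 (Ioo 0 (1 / 2))] fun r ↦ 2 ^ μ * r ^ μ :=
      eventually_principal.2 fun r hr ↦ by
        rw [besselComparison, if_pos hr.2, mul_rpow two_pos.le hr.1.le]
    refine IsTheta.trans_eventuallyEq (IsTheta.const_mul_right (by positivity) ?_) heq.symm
    exact (isTheta_besselI_rpow hμ one_half_pos).mono (principal_mono.2 Ioo_subset_Ioc_self)
  have large : besselI μ =Θ[𝓟 (Ici (1 / 2))] besselComparison μ := by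
    have heq : besselComparison μ =ᶠ[𝓟 (Ici (1 / 2))]
        fun r ↦ 2 ^ (-1 / 2 : ℝ) * (r ^ (-1 / 2 : ℝ) * exp r) :=
      eventually_principal.2 fun r hr ↦ by
        rw [besselComparison, if_neg (not_lt.2 hr),
          mul_rpow two_pos.le (one_half_pos.le.trans hr), mul_assoc]
    exact ((isTheta_besselI_rpow_mul_exp hμ one_half_pos).const_mul_right
      (by positivity)).trans_eventuallyEq heq.symm
  rw [← Ioo_union_Ici_eq_Ioi one_half_pos, ← sup_principal]
  exact small.sup large

lemma besselHeatKernel_div_heatComparison (α cα : ℝ) {t x y : ℝ} (ht : 0 < t) (hx : 0 < x)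
    (hy : 0 < y) : besselHeatKernel α cα t x y / heatComparison α t x y =
      cα * besselI ((α - 1) / 2) (x * y / (2 * t)) /
        besselComparison ((α - 1) / 2) (x * y / (2 * t)) := by
  have hxy : 0 < x * y := mul_pos hx hy
  have hregime : x * y / (2 * t) < 1 / 2 ↔ x * y < t := by
    rw [div_lt_iff₀ (by positivity)]
    constructor <;> intro h <;> linarith
  have hdouble : 2 * (x * y / (2 * t)) = x * y / t := by field_simp
  rw [besselHeatKernel, heatComparison, besselComparison, hdouble]
  simp only [hregime]
  have hexp : exp (-|x - y| ^ 2 / (4 * t)) =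
      exp (-(x ^ 2 + y ^ 2) / (4 * t)) * exp (x * y / (2 * t)) := by
    rw [← exp_add, sq_abs]
    congr 1
    field_simp
    ring
  have hα : -(α - 1) / 2 = -((α - 1) / 2) := by ring
  split_ifs
  · rw [show -(α + 1) / 2 = -1 + -((α - 1) / 2) by ring, rpow_add ht, rpow_neg_one, hα,
      rpow_neg hxy.le, rpow_neg ht.le, div_rpow hxy.le ht.le]
    field_simp
  · rw [hexp, hα, rpow_neg hxy.le, show -α / 2 = -((α - 1) / 2) + (-1 / 2) by ring,
      rpow_add hxy, rpow_neg hxy.le, div_rpow hxy.le ht.le]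
    have hsq : t ^ (-1 / 2 : ℝ) * t ^ (-1 / 2 : ℝ) = t⁻¹ := by
      rw [← rpow_add ht, ← rpow_neg_one]
      norm_num
    rw [← hsq]
    field_simp

theorem stmt7_general (α : ℝ) (hα : -1 < α) (cα : ℝ) (hcα : 0 < cα) :
    ∃ C > 0, ∀ x > 0, ∀ y > 0, ∀ t > 0,
      C⁻¹ ≤ besselHeatKernel α cα t x y / heatComparison α t x y ∧
      besselHeatKernel α cα t x y / heatComparison α t x y ≤ C := by
  have hμ : -1 < (α - 1) / 2 := by linarith
  obtain ⟨C, hC, hbounds⟩ := exists_inv_le_div_le_of_isTheta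
    ((isTheta_besselI_besselComparison hμ).const_mul_left hcα.ne')
    (fun r hr ↦ mul_nonneg hcα.le (besselI_nonneg hμ hr))
    (fun r hr ↦ besselComparison_pos _ hr)
  refine ⟨C, hC, fun x hx y hy t ht ↦ ?_⟩
  rw [besselHeatKernel_div_heatComparison α cα ht hx hy]
  exact hbounds _ (show 0 < x * y / (2 * t) by positivity)

theorem stmt7 (α : ℝ) (hα : -1/2 < α) (cα : ℝ) (hcα : 0 < cα) :
    ∃ C > 0, ∀ x > 0, ∀ y > 0, ∀ t > 0,
      C⁻¹ ≤ besselHeatKernel α cα t x y / heatComparison α t x y ∧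
      besselHeatKernel α cα t x y / heatComparison α t x y ≤ C :=
  stmt7_general α (by linarith) cα hcα
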